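/- Let s > 0 and n ≥ 1. There exists a constant C depending only on n, s such that for every x₀ ∈ ℝⁿ, every M ≥ 0, and every polynomial P ∈ Γ(x₀, M), there exists a function F ∈ F^s(ℝⁿ) satisfying: (A) the ⌊s⌋-jet of F at x₀ equals P; (B) F ≥ 0 on ℝⁿ; (C) ‖F‖_{Ḟ^s(ℝⁿ)} ≤ C·M; and (D) ‖F‖_{C^s(ℝⁿ)} ≤ C·M, hence ‖F‖_{F^s(ℝⁿ)} ≤ C·M. -/

import Mathlib

open Set ENNReal
open scoped NNReal

noncomputable section

/-- The largest integer strictly less than `s` (for `s > 0`). -/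
def lowFloor (s : ℝ) : ℕ := ⌈s⌉₊ - 1

variable {E : Type*} [NormedAddCommGroup E] [NormedSpace ℝ E]

/-- `max_{0 ≤ m < s} sup_{x ∈ Ω} |∇^m F(x)|`, valued in `ℝ≥0∞`. -/
def derivSup (s : ℝ) (Ω : Set E) (F : E → ℝ) : ℝ≥0∞ :=
  ⨆ (m : ℕ) (_ : m ≤ lowFloor s) (x : E) (_ : x ∈ Ω),
    (‖iteratedFDerivWithin ℝ m F Ω x‖₊ : ℝ≥0∞)

/-- The homogeneous Hölder seminorm `‖F‖_{Ċ^s(Ω)}`, valued in `ℝ≥0∞`. -/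
def holderSemi (s : ℝ) (Ω : Set E) (F : E → ℝ) : ℝ≥0∞ :=
  ⨆ (x : E) (_ : x ∈ Ω) (y : E) (_ : y ∈ Ω) (_ : x ≠ y),
    (‖iteratedFDerivWithin ℝ (lowFloor s) F Ω x
        - iteratedFDerivWithin ℝ (lowFloor s) F Ω y‖₊ : ℝ≥0∞)
      / ENNReal.ofReal (‖x - y‖ ^ (s - (lowFloor s : ℝ)))

/-- The Hölder norm `‖F‖_{C^s(Ω)}`, valued in `ℝ≥0∞`. -/
def csNorm (s : ℝ) (Ω : Set E) (F : E → ℝ) : ℝ≥0∞ :=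
  derivSup s Ω F + holderSemi s Ω F

/-- Membership in `C^s(Ω)`. -/
def MemCs (s : ℝ) (Ω : Set E) (F : E → ℝ) : Prop :=
  ContDiffOn ℝ (lowFloor s : ℕ∞) F Ω ∧ csNorm s Ω F ≠ ∞

/-- The flat seminorm `‖F‖_{Ḟ^s(Ω)}`, valued in `ℝ≥0∞`.  (In `ℝ≥0∞` one has
`0/0 = 0` and `a/0 = ∞` for `a ≠ 0`, matching the paper's conventions; for
`0 < s < 1` the supremum is empty, hence `0`.) -/
def flatSemi (s : ℝ) (Ω : Set E) (F : E → ℝ) : ℝ≥0∞ :=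
  ⨆ (m : ℕ) (_ : 1 ≤ m) (_ : m ≤ lowFloor s) (x : E) (_ : x ∈ Ω),
    ((‖iteratedFDerivWithin ℝ m F Ω x‖₊ : ℝ≥0∞) ^ s
      / ENNReal.ofReal (F x) ^ (s - (m : ℝ))) ^ (1 / (m : ℝ))

/-- Membership in the cone `F^s(Ω)`. -/
def MemFs (s : ℝ) (Ω : Set E) (F : E → ℝ) : Prop :=
  MemCs s Ω F ∧ (∀ x ∈ Ω, 0 ≤ F x) ∧ flatSemi s Ω F ≠ ∞

/-- The norm `‖F‖_{F^s(Ω)} = ‖F‖_{C^s(Ω)} + ‖F‖_{Ḟ^s(Ω)}`. -/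
def fsNorm (s : ℝ) (Ω : Set E) (F : E → ℝ) : ℝ≥0∞ :=
  csNorm s Ω F + flatSemi s Ω F

/-- `sup_{x ∈ Ω} |F(x)|`, valued in `ℝ≥0∞`. -/
def supNormSet (Ω : Set E) (F : E → ℝ) : ℝ≥0∞ :=
  ⨆ (x : E) (_ : x ∈ Ω), (‖F x‖₊ : ℝ≥0∞)

/-- `P` is (the function given by) a polynomial of degree at most `D`. -/
def IsPolyDeg (D : ℕ) (P : E → ℝ) : Prop :=
  ContDiff ℝ (⊤ : ℕ∞) P ∧ ∀ x, iteratedFDeriv ℝ (D + 1) P x = 0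

/-- The degree-`D` Taylor polynomial (jet) of `F` at `x`, as a function. -/
def jetAt (D : ℕ) (F : E → ℝ) (x : E) : E → ℝ :=
  fun y => ∑ m ∈ Finset.range (D + 1),
    (iteratedFDeriv ℝ m F x fun _ => y - x) / m.factorial

/-- The degree-`D` Taylor polynomial of `F` at `x` using derivatives within `Ω`. -/
def jetWithinAt (D : ℕ) (F : E → ℝ) (Ω : Set E) (x : E) : E → ℝ :=
  fun y => ∑ m ∈ Finset.range (D + 1),
    (iteratedFDerivWithin ℝ m F Ω x fun _ => y - x) / m.factorial

/-- The pointwise flatness quantity `max_{1≤m<s} (|∇^m P(x)|^s / P(x)^{s-m})^{1/m}`. -/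
def jetFlatAt (s : ℝ) (P : E → ℝ) (x : E) : ℝ≥0∞ :=
  ⨆ (m : ℕ) (_ : 1 ≤ m) (_ : m ≤ lowFloor s),
    ((‖iteratedFDeriv ℝ m P x‖₊ : ℝ≥0∞) ^ s
      / ENNReal.ofReal (P x) ^ (s - (m : ℝ))) ^ (1 / (m : ℝ))

/-- The set `Γ(x₀, M)` of flat nonnegative jets. -/
def Gamma (s : ℝ) (x₀ : E) (M : ℝ) : Set (E → ℝ) :=
  {P | IsPolyDeg (lowFloor s) P ∧ 0 ≤ P x₀ ∧
    (∀ m ≤ lowFloor s, ‖iteratedFDeriv ℝ m P x₀‖ ≤ M) ∧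
    jetFlatAt s P x₀ ≤ ENNReal.ofReal M}

/-- `‖P⃗‖_{J C^s(E)}` for a family of jets `P : E → (E → ℝ)`. -/
def jetCNorm (s : ℝ) (Eset : Set E) (P : E → E → ℝ) : ℝ≥0∞ :=
  (⨆ (x : E) (_ : x ∈ Eset) (m : ℕ) (_ : m ≤ lowFloor s),
      (‖iteratedFDeriv ℝ m (P x) x‖₊ : ℝ≥0∞))
  + ⨆ (x : E) (_ : x ∈ Eset) (y : E) (_ : y ∈ Eset) (_ : x ≠ y)
      (m : ℕ) (_ : m ≤ lowFloor s),
      (‖iteratedFDeriv ℝ m (P x - P y) y‖₊ : ℝ≥0∞)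
        / ENNReal.ofReal (‖x - y‖ ^ (s - (m : ℝ)))

/-- `‖P⃗‖_{J Ḟ^s(E)}` for a family of jets. -/
def jetFlatNorm (s : ℝ) (Eset : Set E) (P : E → E → ℝ) : ℝ≥0∞ :=
  ⨆ (x : E) (_ : x ∈ Eset) (m : ℕ) (_ : 1 ≤ m) (_ : m ≤ lowFloor s),
    ((‖iteratedFDeriv ℝ m (P x) x‖₊ : ℝ≥0∞) ^ s
      / ENNReal.ofReal |P x x| ^ (s - (m : ℝ))) ^ (1 / (m : ℝ))

/-- `‖P⃗‖_{J F^s(E)}`. -/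
def jetFsNorm (s : ℝ) (Eset : Set E) (P : E → E → ℝ) : ℝ≥0∞ :=
  jetCNorm s Eset P + jetFlatNorm s Eset P

/-- The trace norm `‖f‖_{F^s(S)}` (with `inf ∅ = ∞`). -/
def traceNorm (s : ℝ) (S : Set E) (f : E → ℝ) : ℝ≥0∞ :=
  ⨅ (F : E → ℝ) (_ : MemFs s (univ : Set E) F ∧ ∀ x ∈ S, F x = f x),
    fsNorm s (univ : Set E) F


/-- Iterated derivatives of a function precomposed with an affine homothety. -/
theorem iteratedFDeriv_mul_comp_smul_add {f : E → ℝ} (hf : ContDiff ℝ (⊤ : ℕ∞) f)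
    (a c : ℝ) (b : E) (m : ℕ) (x : E) :
    iteratedFDeriv ℝ m (fun y => a * f (c • y + b)) x =
      (a * c ^ m) • iteratedFDeriv ℝ m f (c • x + b) := by
  have hshift : ContDiff ℝ (m : ℕ∞) (fun z => f (z + b)) :=
    (hf.comp (contDiff_id.add contDiff_const)).of_le (mod_cast le_top)
  have hcomp : ContDiff ℝ (m : ℕ∞) (fun y => f (c • y + b)) :=
    hshift.comp (contDiff_const_smul c)
  have hsmul := iteratedFDeriv_const_smul_apply' (𝕜 := ℝ) (i := m) (x := x) (a := a)
    (f := fun y => f (c • y + b)) hcomp.contDiffAt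
  simp only [smul_eq_mul] at hsmul
  rw [hsmul, iteratedFDeriv_comp_const_smul (f := fun z => f (z + b)) c hshift]
  simp only [iteratedFDeriv_comp_add_right, smul_smul]

theorem norm_iteratedFDeriv_const_le_one (m : ℕ) (x : E) :
    ‖iteratedFDeriv ℝ m (fun _ : E => (1 : ℝ)) x‖ ≤ 1 := by
  rcases Nat.eq_zero_or_pos m with rfl | hm
  · simp
  · rw [iteratedFDeriv_const_of_ne hm.ne']
    simp

/-- A polynomial with derivatives bounded by `1` at the origin has derivatives bounded on the
unit ball. -/
theorem IsPolyDeg.norm_iteratedFDeriv_le {D : ℕ} {p : E → ℝ} (hp : IsPolyDeg D p)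
    (h0 : ∀ m ≤ D, ‖iteratedFDeriv ℝ m p 0‖ ≤ 1) {k : ℕ} (hk : k ≤ D + 1) {y : E}
    (hy : ‖y‖ ≤ 1) : ‖iteratedFDeriv ℝ k p y‖ ≤ D + 1 - k := by
  induction hk using Nat.decreasingInduction generalizing y with
  | self => simp [hp.2]
  | of_succ k hk ih =>
    have hmv := (convex_closedBall (0 : E) 1).norm_image_sub_le_of_norm_fderiv_le (𝕜 := ℝ)
      (f := iteratedFDeriv ℝ k p) (C := (D + 1 - (k + 1 : ℕ) : ℝ)) (x := 0) (y := y)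
      (fun z _ => hp.1.differentiable_iteratedFDeriv (mod_cast ENat.natCast_lt_top k) z)
      (fun z hz => by
        rw [norm_fderiv_iteratedFDeriv]
        exact ih (by simpa using hz))
      (by simp) (by simpa using hy)
    have hkD : ((k + 1 : ℕ) : ℝ) ≤ D + 1 := by exact_mod_cast hk
    have hle : (D + 1 - (k + 1 : ℕ) : ℝ) * ‖y - 0‖ ≤ D + 1 - (k + 1 : ℕ) :=
      mul_le_of_le_one_right (by linarith) (by simpa using hy)
    have htri := norm_le_norm_add_norm_sub' (iteratedFDeriv ℝ k p y) (iteratedFDeriv ℝ k p 0)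
    have := h0 k (by omega)
    push_cast at *
    linarith

theorem IsPolyDeg.abs_sub_le {D : ℕ} {p : E → ℝ} (hp : IsPolyDeg D p)
    (h0 : ∀ m ≤ D, ‖iteratedFDeriv ℝ m p 0‖ ≤ 1) {y : E} (hy : ‖y‖ ≤ 1) :
    |p y - p 0| ≤ (D + 1) * ‖y‖ := by
  have hmv := (convex_closedBall (0 : E) 1).norm_image_sub_le_of_norm_fderiv_le (𝕜 := ℝ)
    (f := p) (C := (D + 1 : ℝ)) (x := 0) (y := y)
    (fun z _ => (hp.1.differentiable (by simp)) z)
    (fun z hz => by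
      have h := hp.norm_iteratedFDeriv_le h0 (k := 1) (by omega) (y := z) (by simpa using hz)
      rw [← norm_fderiv_iteratedFDeriv] at h
      have h' : ‖fderiv ℝ p z‖ = ‖fderiv ℝ (iteratedFDeriv ℝ 0 p) z‖ := by
        rw [norm_fderiv_iteratedFDeriv, ← norm_iteratedFDeriv_fderiv, norm_iteratedFDeriv_zero]
      rw [h']
      push_cast at h
      linarith)
    (by simp) (by simpa using hy)
  simpa using hmv

/-- Normalized extension: a polynomial equal to `1` at the origin with derivatives bounded by `1`
there agrees near the origin with a function bounded below by `1/2` and with uniformly bounded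
derivatives. -/
theorem exists_normalized_extension [FiniteDimensional ℝ E] [HasContDiffBump E] (D : ℕ) :
    ∃ K : ℝ, 1 ≤ K ∧ ∀ p : E → ℝ, IsPolyDeg D p → p 0 = 1 →
      (∀ m ≤ D, ‖iteratedFDeriv ℝ m p 0‖ ≤ 1) →
      ∃ G : E → ℝ, ContDiff ℝ (⊤ : ℕ∞) G ∧ (∀ x, 1 / 2 ≤ G x) ∧
        (∀ m ≤ D + 1, ∀ x, ‖iteratedFDeriv ℝ m G x‖ ≤ K) ∧ G =ᶠ[nhds 0] p := by
  have hD : (0 : ℝ) < D + 1 := by positivity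
  let θ : ContDiffBump (0 : E) := ⟨1 / (4 * (D + 1)), 1 / (2 * (D + 1)), by positivity, by
    gcongr; norm_num⟩
  have hθ : ContDiff ℝ (⊤ : ℕ∞) (θ : E → ℝ) := θ.contDiff
  have hbound : ∀ m : ℕ, ∃ B : ℝ, ∀ x, ‖iteratedFDeriv ℝ m (θ : E → ℝ) x‖ ≤ B := fun m =>
    (θ.hasCompactSupport.iteratedFDeriv (𝕜 := ℝ) m).exists_bound_of_continuous
      (hθ.continuous_iteratedFDeriv (mod_cast le_top))
  choose B hB using hbound
  have hB0 : ∀ m, 0 ≤ B m := fun m => (norm_nonneg _).trans (hB m 0)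
  let L : ℕ → ℝ := fun m => ∑ i ∈ Finset.range (m + 1), (m.choose i : ℝ) * B i * (D + 2)
  have hL0 : ∀ m, 0 ≤ L m := fun m => Finset.sum_nonneg fun i _ => by
    have := hB0 i
    positivity
  have hsmall : ∀ x : E, x ∈ tsupport (θ : E → ℝ) → (D + 1) * ‖x‖ ≤ 1 / 2 := by
    intro x hx
    rw [θ.tsupport_eq] at hx
    have hx' : ‖x‖ ≤ 1 / (2 * (D + 1)) := mem_closedBall_zero_iff.1 hx
    calc (D + 1) * ‖x‖ ≤ (D + 1) * (1 / (2 * (D + 1))) := by gcongr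
      _ = 1 / 2 := by field_simp
  have hunit : ∀ x : E, x ∈ tsupport (θ : E → ℝ) → ‖x‖ ≤ 1 := by
    intro x hx
    have h1 := hsmall x hx
    have h2 : (0 : ℝ) ≤ D * ‖x‖ := by positivity
    linarith
  refine ⟨1 + ∑ m ∈ Finset.range (D + 2), L m,
    le_add_of_nonneg_right (Finset.sum_nonneg fun m _ => hL0 m), ?_⟩
  intro p hp hp0 hpm
  have hq : ContDiff ℝ (⊤ : ℕ∞) (fun x => p x - 1) := hp.1.sub contDiff_const
  have hqb : ∀ k ≤ D + 1, ∀ x ∈ tsupport (θ : E → ℝ),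
      ‖iteratedFDeriv ℝ k (fun x => p x - 1) x‖ ≤ D + 2 := by
    intro k hk x hx
    have hsub : iteratedFDeriv ℝ k (fun x => p x - 1) x =
        iteratedFDeriv ℝ k p x - iteratedFDeriv ℝ k (fun _ : E => (1 : ℝ)) x :=
      iteratedFDeriv_sub_apply (hp.1.of_le (mod_cast le_top)).contDiffAt contDiff_const.contDiffAt
    rw [hsub]
    have h1 := hp.norm_iteratedFDeriv_le hpm hk (hunit x hx)
    have h2 := norm_iteratedFDeriv_const_le_one k x
    have h3 := norm_sub_le (iteratedFDeriv ℝ k p x) (iteratedFDeriv ℝ k (fun _ : E => (1 : ℝ)) x)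
    have h4 : (0 : ℝ) ≤ k := by positivity
    linarith
  refine ⟨fun x => 1 + θ x * (p x - 1), contDiff_const.add (hθ.mul hq), ?_, ?_, ?_⟩
  · intro x
    by_cases hx : x ∈ tsupport (θ : E → ℝ)
    · have h1 := hp.abs_sub_le hpm (hunit x hx)
      rw [hp0] at h1
      have h2 : |θ x * (p x - 1)| ≤ 1 / 2 := by
        rw [abs_mul, abs_of_nonneg θ.nonneg]
        exact (mul_le_of_le_one_left (abs_nonneg _) θ.le_one).trans (h1.trans (hsmall x hx))
      have := neg_le_of_abs_le h2
      linarith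
    · simp only [image_eq_zero_of_notMem_tsupport hx]
      norm_num
  · intro m hm x
    have hadd : iteratedFDeriv ℝ m (fun x => 1 + θ x * (p x - 1)) x =
        iteratedFDeriv ℝ m (fun _ : E => (1 : ℝ)) x +
          iteratedFDeriv ℝ m (fun x => θ x * (p x - 1)) x :=
      iteratedFDeriv_add_apply contDiff_const.contDiffAt
        ((hθ.mul hq).of_le (mod_cast le_top)).contDiffAt
    have hleib : ‖iteratedFDeriv ℝ m (fun x => θ x * (p x - 1)) x‖ ≤ L m := by
      refine (norm_iteratedFDeriv_mul_le hθ hq x (mod_cast le_top)).trans ?_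
      refine Finset.sum_le_sum fun i _ => ?_
      by_cases hx : x ∈ tsupport (θ : E → ℝ)
      · have h1 := hB i x
        have h2 := hqb (m - i) (by omega) x hx
        have := hB0 i
        gcongr
      · have h1 : iteratedFDeriv ℝ i (θ : E → ℝ) x = 0 := by
          by_contra h
          exact hx (support_iteratedFDeriv_subset i h)
        rw [h1]
        have := hB0 i
        simp only [norm_zero, mul_zero, zero_mul]
        positivity
    rw [hadd]
    have hLm : L m ≤ ∑ m ∈ Finset.range (D + 2), L m :=
      Finset.single_le_sum (fun i _ => hL0 i) (Finset.mem_range.2 (by omega))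
    exact (norm_add_le _ _).trans
      (add_le_add (norm_iteratedFDeriv_const_le_one m x) (hleib.trans hLm))
  · filter_upwards [θ.eventuallyEq_one] with x hx
    simp [hx]

theorem natCast_lt_of_le_lowFloor {s : ℝ} (hs : 0 < s) {m : ℕ} (hm : m ≤ lowFloor s) :
    (m : ℝ) < s := by
  have hceil : 0 < ⌈s⌉₊ := Nat.ceil_pos.2 hs
  exact Nat.lt_ceil.1 (by unfold lowFloor at hm; omega)

theorem le_lowFloor_add_one {s : ℝ} (hs : 0 < s) : s ≤ lowFloor s + 1 := by
  have hceil : 0 < ⌈s⌉₊ := Nat.ceil_pos.2 hs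
  have h : ⌈s⌉₊ = lowFloor s + 1 := by unfold lowFloor; omega
  exact_mod_cast h ▸ Nat.le_ceil s

/-- The flatness quantity is at most `B` iff the corresponding real inequality holds. -/
theorem flat_ratio_le_iff {V : Type*} [SeminormedAddCommGroup V] {s : ℝ} (hs : 0 < s) {m : ℕ}
    (hm : 1 ≤ m) (w : V) {v B : ℝ} (hv : 0 < v) (hB : 0 ≤ B) :
    ((‖w‖₊ : ℝ≥0∞) ^ s / ENNReal.ofReal v ^ (s - (m : ℝ))) ^ (1 / (m : ℝ)) ≤ ENNReal.ofReal B ↔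
      ‖w‖ ^ s ≤ B ^ m * v ^ (s - (m : ℝ)) := by
  have hm' : (0 : ℝ) < m := by exact_mod_cast hm
  have hvs : 0 < v ^ (s - (m : ℝ)) := Real.rpow_pos_of_pos hv _
  have hnorm : (‖w‖₊ : ℝ≥0∞) = ENNReal.ofReal ‖w‖ := (ofReal_norm w).symm
  rw [one_div, ENNReal.rpow_inv_le_iff hm', hnorm,
    ENNReal.ofReal_rpow_of_nonneg (norm_nonneg _) hs.le, ENNReal.ofReal_rpow_of_pos hv,
    ← ENNReal.ofReal_div_of_pos hvs, ENNReal.rpow_natCast, ← ENNReal.ofReal_pow hB,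
    ENNReal.ofReal_le_ofReal_iff (by positivity), div_le_iff₀ hvs]

theorem flatSemi_univ_le {s : ℝ} (hs : 0 < s) {F : E → ℝ} {B : ℝ} (hB : 0 ≤ B)
    (hF : ∀ x, 0 < F x)
    (h : ∀ m, 1 ≤ m → m ≤ lowFloor s → ∀ x,
      ‖iteratedFDeriv ℝ m F x‖ ^ s ≤ B ^ m * F x ^ (s - (m : ℝ))) :
    flatSemi s (univ : Set E) F ≤ ENNReal.ofReal B := by
  simp only [flatSemi, iteratedFDerivWithin_univ]
  refine iSup_le fun m => iSup_le fun hm => iSup_le fun hmD => iSup_le fun x => iSup_le fun _ => ?_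
  exact (flat_ratio_le_iff hs hm _ (hF x) hB).2 (h m hm hmD x)

theorem csNorm_univ_le {s : ℝ} {F : E → ℝ} {A B : ℝ} (hA : 0 ≤ A) (hB : 0 ≤ B)
    (hd : ∀ m ≤ lowFloor s, ∀ x, ‖iteratedFDeriv ℝ m F x‖ ≤ A)
    (hh : ∀ x y, ‖iteratedFDeriv ℝ (lowFloor s) F x - iteratedFDeriv ℝ (lowFloor s) F y‖ ≤
      B * ‖x - y‖ ^ (s - (lowFloor s : ℝ))) :
    csNorm s (univ : Set E) F ≤ ENNReal.ofReal (A + B) := by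
  rw [ENNReal.ofReal_add hA hB, csNorm]
  refine add_le_add ?_ ?_
  · simp only [derivSup, iteratedFDerivWithin_univ]
    refine iSup_le fun m => iSup_le fun hm => iSup_le fun x => iSup_le fun _ => ?_
    rw [← enorm_eq_nnnorm, ← ofReal_norm]
    exact ENNReal.ofReal_le_ofReal (hd m hm x)
  · simp only [holderSemi, iteratedFDerivWithin_univ]
    refine iSup_le fun x => iSup_le fun _ => iSup_le fun y => iSup_le fun _ => iSup_le fun _ => ?_
    refine ENNReal.div_le_of_le_mul ?_
    rw [← enorm_eq_nnnorm, ← ofReal_norm, ← ENNReal.ofReal_mul hB]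
    exact ENNReal.ofReal_le_ofReal (hh x y)

/-- A bounded Lipschitz map is Hölder continuous of every exponent in `[0, 1]`. -/
theorem norm_sub_le_mul_rpow {X V : Type*} [NormedAddCommGroup X] [NormedAddCommGroup V]
    {f : X → V} {K α : ℝ}
    (hb : ∀ x, ‖f x‖ ≤ K) (hl : ∀ x y, ‖f x - f y‖ ≤ K * ‖x - y‖) (hα0 : 0 ≤ α)
    (hα1 : α ≤ 1) (x y : X) : ‖f x - f y‖ ≤ 2 * K * ‖x - y‖ ^ α := by
  have hK : 0 ≤ K := (norm_nonneg _).trans (hb x)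
  rcases le_total ‖x - y‖ 1 with h | h
  · have h1 : ‖x - y‖ ≤ ‖x - y‖ ^ α := by
      rcases (norm_nonneg (x - y)).eq_or_lt with h0 | h0
      · rw [← h0]
        positivity
      · simpa using Real.rpow_le_rpow_of_exponent_ge h0 h hα1
    have h2 := mul_le_mul_of_nonneg_left h1 hK
    have h3 := mul_nonneg hK (Real.rpow_nonneg (norm_nonneg (x - y)) α)
    linarith [hl x y]
  · have h1 : 1 ≤ ‖x - y‖ ^ α := Real.one_le_rpow h hα0
    have h2 := mul_le_mul_of_nonneg_left h1 hK
    linarith [norm_sub_le (f x) (f y), hb x, hb y]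

theorem mul_inv_pow_rpow {a M r s : ℝ} (ha : 0 < a) (hM : 0 < M) (hr : 0 < r)
    (hrs : r ^ s = a / M) (m : ℕ) : (a * r⁻¹ ^ m) ^ s = M ^ m * a ^ (s - (m : ℝ)) := by
  have h1 : (r⁻¹ ^ m) ^ s = (M / a) ^ m := by
    rw [← Real.rpow_natCast, ← Real.rpow_mul (by positivity), mul_comm,
      Real.rpow_mul (by positivity),
      Real.inv_rpow hr.le, hrs, inv_div, Real.rpow_natCast]
  rw [Real.mul_rpow ha.le (by positivity), h1, Real.rpow_sub ha, Real.rpow_natCast, div_pow]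
  field_simp

/-- The extension of a flat jet with positive value at the base point. -/
theorem exists_flat_extension {s K : ℝ} (hs : 0 < s) (hK : 1 ≤ K)
    (hext : ∀ p : E → ℝ, IsPolyDeg (lowFloor s) p → p 0 = 1 →
      (∀ m ≤ lowFloor s, ‖iteratedFDeriv ℝ m p 0‖ ≤ 1) →
      ∃ G : E → ℝ, ContDiff ℝ (⊤ : ℕ∞) G ∧ (∀ x, 1 / 2 ≤ G x) ∧
        (∀ m ≤ lowFloor s + 1, ∀ x, ‖iteratedFDeriv ℝ m G x‖ ≤ K) ∧ G =ᶠ[nhds 0] p)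
    {x₀ : E} {M : ℝ} {P : E → ℝ} (hP : P ∈ Gamma s x₀ M) (ha : 0 < P x₀) :
    ∃ F : E → ℝ, ContDiff ℝ (⊤ : ℕ∞) F ∧ (∀ x, 0 < F x) ∧
      (∀ m, iteratedFDeriv ℝ m F x₀ = iteratedFDeriv ℝ m P x₀) ∧
      flatSemi s (univ : Set E) F ≤ ENNReal.ofReal ((2 * K) ^ s * M) ∧
      csNorm s (univ : Set E) F ≤ ENNReal.ofReal (3 * K * M) := by
  obtain ⟨hpoly, -, hbd, hflat⟩ := hP
  set a := P x₀ with ha_def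
  have haM : a ≤ M := by
    have h := hbd 0 (Nat.zero_le _)
    rw [norm_iteratedFDeriv_zero] at h
    exact (le_abs_self _).trans h
  have hM : 0 < M := ha.trans_le haM
  have hK0 : 0 < K := one_pos.trans_le hK
  set r : ℝ := (a / M) ^ s⁻¹ with hr_def
  have hr : 0 < r := Real.rpow_pos_of_pos (div_pos ha hM) _
  have hr1 : r ≤ 1 := Real.rpow_le_one (by positivity) ((div_le_one hM).2 haM) (by positivity)
  have hrs : r ^ s = a / M := Real.rpow_inv_rpow (by positivity) hs.ne'
  have key := mul_inv_pow_rpow ha hM hr hrs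
  have hPm : ∀ m ≤ lowFloor s, ‖iteratedFDeriv ℝ m P x₀‖ ≤ a * r⁻¹ ^ m := by
    intro m hm
    rcases Nat.eq_zero_or_pos m with rfl | hm0
    · rw [norm_iteratedFDeriv_zero, ← ha_def, Real.norm_of_nonneg ha.le]
      simp
    · have h := (le_iSup₂_of_le m hm0 (le_iSup_of_le hm le_rfl)).trans hflat
      rw [flat_ratio_le_iff hs hm0 _ ha hM.le, ← key m] at h
      exact (Real.rpow_le_rpow_iff (norm_nonneg _) (by positivity) hs).1 h
  let p : E → ℝ := fun y => a⁻¹ * P (r • y + x₀)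
  have hpd : ∀ m x, iteratedFDeriv ℝ m p x = (a⁻¹ * r ^ m) • iteratedFDeriv ℝ m P (r • x + x₀) :=
    iteratedFDeriv_mul_comp_smul_add hpoly.1 a⁻¹ r x₀
  have hp : IsPolyDeg (lowFloor s) p := by
    refine ⟨contDiff_const.mul (hpoly.1.comp ((contDiff_const_smul r).add contDiff_const)), ?_⟩
    intro x
    rw [hpd, hpoly.2, smul_zero]
  have hp0 : p 0 = 1 := by
    simp only [p, smul_zero, zero_add]
    exact inv_mul_cancel₀ ha.ne'
  have hpm : ∀ m ≤ lowFloor s, ‖iteratedFDeriv ℝ m p 0‖ ≤ 1 := by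
    intro m hm
    rw [hpd, norm_smul, Real.norm_of_nonneg (by positivity), smul_zero, zero_add]
    calc a⁻¹ * r ^ m * ‖iteratedFDeriv ℝ m P x₀‖ ≤ a⁻¹ * r ^ m * (a * r⁻¹ ^ m) := by
          gcongr
          exact hPm m hm
      _ = 1 := by rw [inv_pow]; field_simp
  obtain ⟨G, hG, hGlow, hGb, hGp⟩ := hext p hp hp0 hpm
  let b : E := -(r⁻¹ • x₀)
  let F : E → ℝ := fun x => a * G (r⁻¹ • x + b)
  have hFd : ∀ m x, iteratedFDeriv ℝ m F x =
      (a * r⁻¹ ^ m) • iteratedFDeriv ℝ m G (r⁻¹ • x + b) :=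
    iteratedFDeriv_mul_comp_smul_add hG a r⁻¹ b
  have hFlow : ∀ x, a / 2 ≤ F x := fun x => by
    have := mul_le_mul_of_nonneg_left (hGlow (r⁻¹ • x + b)) ha.le
    simp only [F]
    linarith
  have hFpos : ∀ x, 0 < F x := fun x => (half_pos ha).trans_le (hFlow x)
  have hFb : ∀ m ≤ lowFloor s, ∀ x, ‖iteratedFDeriv ℝ m F x‖ ≤ a * r⁻¹ ^ m * K := by
    intro m hm x
    rw [hFd, norm_smul, Real.norm_of_nonneg (by positivity)]
    gcongr
    exact hGb m (by omega) _
  have hMs : a = M * r ^ s := by rw [hrs]; field_simp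
  have hb0 : r⁻¹ • x₀ + b = 0 := add_neg_cancel _
  refine ⟨F, contDiff_const.mul (hG.comp ((contDiff_const_smul _).add contDiff_const)), hFpos,
    ?_, ?_, ?_⟩
  · intro m
    rw [hFd, hb0, (hGp.iteratedFDeriv ℝ m).eq_of_nhds, hpd, smul_smul, smul_zero, zero_add]
    have : a * r⁻¹ ^ m * (a⁻¹ * r ^ m) = 1 := by rw [inv_pow]; field_simp
    rw [this, one_smul]
  · refine flatSemi_univ_le hs (by positivity) hFpos fun m hm hmD x => ?_
    have hms : 0 < s - (m : ℝ) := sub_pos.2 (natCast_lt_of_le_lowFloor hs hmD)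
    have h2K : 1 ≤ (2 * K) ^ s := Real.one_le_rpow (by linarith) hs.le
    have hpow : K ^ s * 2 ^ (s - (m : ℝ)) ≤ ((2 * K) ^ s) ^ m := by
      calc K ^ s * 2 ^ (s - (m : ℝ)) ≤ K ^ s * 2 ^ s := by
            gcongr
            · norm_num
            · linarith [(Nat.cast_nonneg m : (0 : ℝ) ≤ m)]
        _ = (2 * K) ^ s := by rw [Real.mul_rpow (by norm_num) hK0.le, mul_comm]
        _ ≤ ((2 * K) ^ s) ^ m := le_self_pow₀ h2K (by omega)
    calc ‖iteratedFDeriv ℝ m F x‖ ^ s ≤ (a * r⁻¹ ^ m * K) ^ s := by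
          gcongr
          exact hFb m hmD x
      _ = M ^ m * (K ^ s * 2 ^ (s - (m : ℝ))) * (a / 2) ^ (s - (m : ℝ)) := by
          rw [Real.mul_rpow (by positivity) hK0.le, key m, Real.div_rpow ha.le (by norm_num)]
          field_simp
      _ ≤ M ^ m * ((2 * K) ^ s) ^ m * F x ^ (s - (m : ℝ)) := by
          gcongr
          exact hFlow x
      _ = ((2 * K) ^ s * M) ^ m * F x ^ (s - (m : ℝ)) := by rw [mul_pow]; ring
  · have hsum : 3 * K * M = K * M + 2 * K * M := by ring
    rw [hsum]
    refine csNorm_univ_le (by positivity) (by positivity) ?_ ?_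
    · intro m hm x
      refine (hFb m hm x).trans ?_
      have hle : a * r⁻¹ ^ m ≤ M := by
        rw [inv_pow, ← div_eq_mul_inv, div_le_iff₀ (by positivity)]
        nth_rewrite 1 [hMs]
        rw [← Real.rpow_natCast r m]
        exact mul_le_mul_of_nonneg_left (Real.rpow_le_rpow_of_exponent_ge hr hr1
          (natCast_lt_of_le_lowFloor hs hm).le) hM.le
      rw [mul_comm K M]
      gcongr
    · intro x y
      set D := lowFloor s
      have hα0 : 0 ≤ s - (D : ℝ) := (sub_pos.2 (natCast_lt_of_le_lowFloor hs le_rfl)).le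
      have hα1 : s - (D : ℝ) ≤ 1 := by linarith [le_lowFloor_add_one hs]
      have hlip : ∀ u v, ‖iteratedFDeriv ℝ D G u - iteratedFDeriv ℝ D G v‖ ≤ K * ‖u - v‖ :=
        fun u v => (convex_univ (𝕜 := ℝ)).norm_image_sub_le_of_norm_fderiv_le (𝕜 := ℝ)
          (fun z _ => hG.differentiable_iteratedFDeriv (mod_cast ENat.natCast_lt_top D) z)
          (fun z _ => by
            rw [norm_fderiv_iteratedFDeriv]
            exact hGb (D + 1) le_rfl z) (mem_univ v) (mem_univ u)
      have hhol := norm_sub_le_mul_rpow (hGb D (Nat.le_succ D)) hlip hα0 hα1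
        (r⁻¹ • x + b) (r⁻¹ • y + b)
      rw [add_sub_add_right_eq_sub, ← smul_sub, norm_smul, Real.norm_of_nonneg (by positivity),
        Real.mul_rpow (by positivity) (norm_nonneg _)] at hhol
      have hscale : a * r⁻¹ ^ D * r⁻¹ ^ (s - (D : ℝ)) = M := by
        rw [mul_assoc, ← Real.rpow_natCast r⁻¹ D, ← Real.rpow_add (by positivity),
          add_sub_cancel, Real.inv_rpow hr.le, hrs]
        field_simp
      rw [hFd, hFd, ← smul_sub, norm_smul, Real.norm_of_nonneg (by positivity)]
      calc a * r⁻¹ ^ D * _ ≤ a * r⁻¹ ^ D *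
            (2 * K * (r⁻¹ ^ (s - (D : ℝ)) * ‖x - y‖ ^ (s - (D : ℝ)))) := by gcongr
        _ = 2 * K * (a * r⁻¹ ^ D * r⁻¹ ^ (s - (D : ℝ))) * ‖x - y‖ ^ (s - (D : ℝ)) := by ring
        _ = 2 * K * M * ‖x - y‖ ^ (s - (D : ℝ)) := by rw [hscale]

/-- A flat jet vanishing at the base point is zero. -/
theorem iteratedFDeriv_eq_zero_of_mem_Gamma {s : ℝ} (hs : 0 < s) {x₀ : E} {M : ℝ} {P : E → ℝ}
    (hP : P ∈ Gamma s x₀ M) (ha : P x₀ = 0) {m : ℕ} (hm : m ≤ lowFloor s) :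
    iteratedFDeriv ℝ m P x₀ = 0 := by
  rw [← norm_eq_zero]
  rcases Nat.eq_zero_or_pos m with rfl | hm0
  · simp [ha]
  · by_contra hne
    have h := (le_iSup₂_of_le m hm0 (le_iSup_of_le hm le_rfl)).trans hP.2.2.2
    have hms : 0 < s - (m : ℝ) := sub_pos.2 (natCast_lt_of_le_lowFloor hs hm)
    have hm' : (0 : ℝ) < 1 / m := by positivity
    have hnum : (‖iteratedFDeriv ℝ m P x₀‖₊ : ℝ≥0∞) ^ s ≠ 0 := by
      rw [Ne, ENNReal.rpow_eq_zero_iff_of_pos hs]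
      simpa using hne
    rw [ha, ENNReal.ofReal_zero, ENNReal.zero_rpow_of_pos hms, ENNReal.div_zero hnum,
      ENNReal.top_rpow_of_pos hm'] at h
    exact ENNReal.ofReal_ne_top (top_le_iff.1 h)

theorem csNorm_zero (s : ℝ) : csNorm s (univ : Set E) (fun _ => (0 : ℝ)) = 0 := by
  have h := csNorm_univ_le (E := E) (s := s) (F := fun _ => (0 : ℝ)) le_rfl le_rfl
    (fun m _ x => by rw [iteratedFDeriv_fun_zero]; simp)
    (fun x y => by rw [iteratedFDeriv_fun_zero]; simp)
  simpa using h

theorem flatSemi_zero {s : ℝ} (hs : 0 < s) :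
    flatSemi s (univ : Set E) (fun _ => (0 : ℝ)) = 0 := by
  refine le_antisymm ?_ bot_le
  simp only [flatSemi, iteratedFDerivWithin_univ]
  refine iSup_le fun m => iSup_le fun hm => iSup_le fun _ => iSup_le fun x => iSup_le fun _ => ?_
  have hm' : (0 : ℝ) < 1 / m := by positivity
  rw [iteratedFDeriv_fun_zero]
  simp [ENNReal.zero_rpow_of_pos hs, ENNReal.zero_rpow_of_pos hm', -one_div]

/-- Lemma `Whitney-single jet`: there is `C = C(n,s)` such
that every jet `P ∈ Γ(x₀,M)` extends to a nonnegative `F ∈ F^s(ℝⁿ)` whose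
`⌊s⌋`-jet at `x₀` is `P`, with `‖F‖_{Ḟ^s} ≤ CM`, `‖F‖_{C^s} ≤ CM`, and hence
`‖F‖_{F^s} ≤ CM`. -/
theorem statement11 (n : ℕ) (hn : 1 ≤ n) (s : ℝ) (hs : 0 < s) :
    ∃ C : ℝ, 0 < C ∧
      ∀ (x₀ : EuclideanSpace ℝ (Fin n)) (M : ℝ), 0 ≤ M →
      ∀ P : EuclideanSpace ℝ (Fin n) → ℝ, P ∈ Gamma s x₀ M →
      ∃ F : EuclideanSpace ℝ (Fin n) → ℝ,
        MemFs s (Set.univ : Set (EuclideanSpace ℝ (Fin n))) F ∧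
        (∀ m ≤ lowFloor s, iteratedFDeriv ℝ m F x₀ = iteratedFDeriv ℝ m P x₀) ∧
        (∀ x, 0 ≤ F x) ∧
        flatSemi s (Set.univ : Set (EuclideanSpace ℝ (Fin n))) F ≤
          ENNReal.ofReal (C * M) ∧
        csNorm s (Set.univ : Set (EuclideanSpace ℝ (Fin n))) F ≤
          ENNReal.ofReal (C * M) ∧
        fsNorm s (Set.univ : Set (EuclideanSpace ℝ (Fin n))) F ≤
          ENNReal.ofReal (C * M) := by
  obtain ⟨K, hK, hext⟩ := exists_normalized_extension
    (E := EuclideanSpace ℝ (Fin n)) (lowFloor s)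
  have hK0 : 0 < K := one_pos.trans_le hK
  have h2K : 0 < (2 * K) ^ s := by positivity
  refine ⟨(2 * K) ^ s + 3 * K, by positivity, fun x₀ M hM P hP => ?_⟩
  rcases hP.2.1.eq_or_lt with ha | ha
  · refine ⟨fun _ => 0, ⟨⟨contDiffOn_const, ?_⟩, fun _ _ => le_rfl, ?_⟩, ?_, fun _ => le_rfl,
      ?_, ?_, ?_⟩
    · simp [csNorm_zero]
    · simp [flatSemi_zero hs]
    · intro m hm
      rw [iteratedFDeriv_eq_zero_of_mem_Gamma hs hP ha.symm hm, iteratedFDeriv_fun_zero]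
      rfl
    · simp [flatSemi_zero hs]
    · simp [csNorm_zero]
    · simp [fsNorm, csNorm_zero, flatSemi_zero hs]
  · obtain ⟨F, hF, hFpos, hjet, hflat, hcs⟩ := exists_flat_extension hs hK hext hP ha
    refine ⟨F, ⟨⟨(hF.of_le (mod_cast le_top)).contDiffOn, ?_⟩, fun x _ => (hFpos x).le, ?_⟩,
      fun m _ => hjet m, fun x => (hFpos x).le, ?_, ?_, ?_⟩
    · exact (hcs.trans_lt ENNReal.ofReal_lt_top).ne
    · exact (hflat.trans_lt ENNReal.ofReal_lt_top).ne
    · refine hflat.trans (ENNReal.ofReal_le_ofReal ?_)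
      gcongr
      linarith
    · refine hcs.trans (ENNReal.ofReal_le_ofReal ?_)
      gcongr
      linarith
    · rw [fsNorm, add_mul, add_comm, ENNReal.ofReal_add (by positivity) (by positivity)]
      exact add_le_add hflat hcs

end
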